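/- Additivity on tensor products: let P and Q be bipartite non-signaling devices over finite sets A1, B1, X1, Y1 and A2, B2, X2, Y2 respectively, and define their tensor product (P ox Q)(a1,a2,b1,b2|x1,x2,y1,y2) := P(a1,b1|x1,y1) * Q(a2,b2|x2,y2). Then P ox Q is a fully non-signaling four-partite device and N_sq(P ox Q) = N_sq(P) + N_sq(Q). -/

import Mathlib

/-- Shannon entropy (base-2) of a finitely supported real-valued distribution. -/
noncomputable def shannonEnt {α : Type} [Fintype α] (p : α → ℝ) : ℝ :=
  -∑ a, p a * Real.logb 2 (p a)

/-- Shannon mutual information (base-2) of a joint distribution on `α × β`. -/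
noncomputable def mutInfo {α β : Type} [Fintype α] [Fintype β] (R : α → β → ℝ) : ℝ :=
  shannonEnt (fun a => ∑ b, R a b) + shannonEnt (fun b => ∑ a, R a b) -
    shannonEnt (fun p : α × β => R p.1 p.2)

/-- A bipartite non-signaling device over finite output sets `A`, `B` and input
sets `X`, `Y`. -/
def IsDevice {A B X Y : Type} [Fintype A] [Fintype B] (P : A → B → X → Y → ℝ) : Prop :=
  (∀ a b x y, 0 ≤ P a b x y) ∧
  (∀ x y, ∑ a, ∑ b, P a b x y = 1) ∧
  (∀ a x y y', ∑ b, P a b x y = ∑ b, P a b x y') ∧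
  (∀ b y x x', ∑ a, P a b x y = ∑ a, P a b x' y)

/-- The set of values `∑_e p_e · I(A:B)_{P_e(·,·|x,y)}` over all (finite) ensembles
`{(p_e, P_e)}` of the device `P` into non-signaling devices. -/
def NsqSet {A B X Y : Type} [Fintype A] [Fintype B]
    (P : A → B → X → Y → ℝ) (x : X) (y : Y) : Set ℝ :=
  { r | ∃ (n : ℕ) (p : Fin n → ℝ) (Pe : Fin n → A → B → X → Y → ℝ),
      (∀ i, 0 ≤ p i) ∧ (∑ i, p i = 1) ∧ (∀ i, IsDevice (Pe i)) ∧
      (∀ a b x' y', ∑ i, p i * Pe i a b x' y' = P a b x' y') ∧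
      r = ∑ i, p i * mutInfo (fun a b => Pe i a b x y) }

/-- The squashed non-locality of a bipartite device: the maximum over inputs `(x,y)` of
the infimum over ensembles of the averaged mutual information at fixed inputs. -/
noncomputable def Nsq {A B X Y : Type} [Fintype A] [Fintype B] [Fintype X] [Fintype Y]
    [Nonempty X] [Nonempty Y] (P : A → B → X → Y → ℝ) : ℝ :=
  Finset.univ.sup' Finset.univ_nonempty (fun xy : X × Y => sInf (NsqSet P xy.1 xy.2))

/-- A local device, i.e. one admitting a local hidden variable model. -/
def IsLocalDevice {A B X Y : Type} [Fintype A] [Fintype B] (P : A → B → X → Y → ℝ) : Prop :=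
  ∃ (n : ℕ) (mu : Fin n → ℝ) (LA : A → X → Fin n → ℝ) (LB : B → Y → Fin n → ℝ),
    (∀ i, 0 ≤ mu i) ∧ (∑ i, mu i = 1) ∧
    (∀ a x i, 0 ≤ LA a x i) ∧ (∀ x i, ∑ a, LA a x i = 1) ∧
    (∀ b y i, 0 ≤ LB b y i) ∧ (∀ y i, ∑ b, LB b y i = 1) ∧
    (∀ a b x y, P a b x y = ∑ i, mu i * LA a x i * LB b y i)

/-- A fully non-signaling four-partite device over output sets `A1, A2, B1, B2` and
input sets `X1, X2, Y1, Y2`: nonnegative, normalized, and no single subsystem can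
signal to the rest (equivalently, no subset of subsystems can signal to the
complementary ones). -/
def IsDevice4 {A1 A2 B1 B2 X1 X2 Y1 Y2 : Type}
    [Fintype A1] [Fintype A2] [Fintype B1] [Fintype B2]
    (P : A1 → A2 → B1 → B2 → X1 → X2 → Y1 → Y2 → ℝ) : Prop :=
  (∀ a1 a2 b1 b2 x1 x2 y1 y2, 0 ≤ P a1 a2 b1 b2 x1 x2 y1 y2) ∧
  (∀ x1 x2 y1 y2, ∑ a1, ∑ a2, ∑ b1, ∑ b2, P a1 a2 b1 b2 x1 x2 y1 y2 = 1) ∧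
  (∀ a2 b1 b2 x2 y1 y2 x1 x1',
    ∑ a1, P a1 a2 b1 b2 x1 x2 y1 y2 = ∑ a1, P a1 a2 b1 b2 x1' x2 y1 y2) ∧
  (∀ a1 b1 b2 x1 y1 y2 x2 x2',
    ∑ a2, P a1 a2 b1 b2 x1 x2 y1 y2 = ∑ a2, P a1 a2 b1 b2 x1 x2' y1 y2) ∧
  (∀ a1 a2 b2 x1 x2 y2 y1 y1',
    ∑ b1, P a1 a2 b1 b2 x1 x2 y1 y2 = ∑ b1, P a1 a2 b1 b2 x1 x2 y1' y2) ∧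
  (∀ a1 a2 b1 x1 x2 y1 y2 y2',
    ∑ b2, P a1 a2 b1 b2 x1 x2 y1 y2 = ∑ b2, P a1 a2 b1 b2 x1 x2 y1 y2')

/-- The set of values `∑_e p_e · I(A1A2:B1B2)` over all ensembles of a four-partite
device into fully non-signaling four-partite devices, at fixed inputs. -/
def Nsq4Set {A1 A2 B1 B2 X1 X2 Y1 Y2 : Type}
    [Fintype A1] [Fintype A2] [Fintype B1] [Fintype B2]
    (P : A1 → A2 → B1 → B2 → X1 → X2 → Y1 → Y2 → ℝ)
    (x1 : X1) (x2 : X2) (y1 : Y1) (y2 : Y2) : Set ℝ :=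
  { r | ∃ (n : ℕ) (p : Fin n → ℝ) (Pe : Fin n → A1 → A2 → B1 → B2 → X1 → X2 → Y1 → Y2 → ℝ),
      (∀ i, 0 ≤ p i) ∧ (∑ i, p i = 1) ∧ (∀ i, IsDevice4 (Pe i)) ∧
      (∀ a1 a2 b1 b2 x1' x2' y1' y2',
        ∑ i, p i * Pe i a1 a2 b1 b2 x1' x2' y1' y2' = P a1 a2 b1 b2 x1' x2' y1' y2') ∧
      r = ∑ i, p i * mutInfo (fun (a : A1 × A2) (b : B1 × B2) =>
            Pe i a.1 a.2 b.1 b.2 x1 x2 y1 y2) }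

/-- The squashed non-locality of a four-partite device with respect to the bipartition
Alice = (A1,A2,X1,X2), Bob = (B1,B2,Y1,Y2). -/
noncomputable def Nsq4 {A1 A2 B1 B2 X1 X2 Y1 Y2 : Type}
    [Fintype A1] [Fintype A2] [Fintype B1] [Fintype B2]
    [Fintype X1] [Fintype X2] [Fintype Y1] [Fintype Y2]
    [Nonempty X1] [Nonempty X2] [Nonempty Y1] [Nonempty Y2]
    (P : A1 → A2 → B1 → B2 → X1 → X2 → Y1 → Y2 → ℝ) : ℝ :=
  Finset.univ.sup' Finset.univ_nonempty
    (fun t : (X1 × X2) × (Y1 × Y2) => sInf (Nsq4Set P t.1.1 t.1.2 t.2.1 t.2.2))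

/-!
For an unnormalised joint distribution `R` of total mass `w`, consider `w * I(R / w)`. This
quantity is homogeneous and satisfies an exact chain rule, whose last terms are the (weighted)
conditional mutual informations. Since it absorbs the weights of an ensemble, an ensemble of a
device is the same thing as a way of writing it as a sum of unnormalised non-signaling devices.

Subadditivity: products of ensembles of `P` and `Q` form an ensemble of the tensor product, and
mutual information is additive on product distributions.

Superadditivity, for an arbitrary four-partite device: the chain rule and data processing give
`I(A₁A₂ : B₁B₂) = I(A₁ : B₁B₂) + I(A₂ : B₁B₂ | A₁) ≥ I(A₁ : B₁) + I(A₂ : B₂ | A₁)`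
for each member of an ensemble. The marginals on the first pair form an ensemble of the first
marginal device. Conditioning the members on the output `a₁` and discarding `b₁` leaves an
ensemble of the second marginal device, because neither operation lets the second pair signal.
-/

open Real
open scoped Pointwise

section Entropy

theorem shannonEnt_eq_sum_negMulLog_div {α : Type} [Fintype α] (p : α → ℝ) :
    shannonEnt p = (∑ a, negMulLog (p a)) / log 2 := by
  simp only [shannonEnt, negMulLog_def, logb, Finset.sum_div, ← Finset.sum_neg_distrib]
  exact Finset.sum_congr rfl fun a _ => by ring

theorem negMulLog_add_mul_log_le_sub {p q : ℝ} (hp : 0 ≤ p) (hq : 0 ≤ q) (hpq : q = 0 → p = 0) :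
    negMulLog p + p * log q ≤ q - p := by
  obtain rfl | hq_pos := hq.eq_or_lt
  · simp [hpq rfl]
  · have hp_eq : q * (p / q) = p := mul_div_cancel₀ p hq_pos.ne'
    calc negMulLog p + p * log q
        = q * negMulLog (p / q) := by
          rw [← hp_eq, negMulLog_mul, hp_eq, negMulLog]
          field_simp
          ring
      _ ≤ q * (1 - p / q) :=
          mul_le_mul_of_nonneg_left (negMulLog_le_one_sub_self (div_nonneg hp hq)) hq
      _ = q - p := by rw [mul_sub, mul_one, hp_eq]

theorem sum_negMulLog_le_neg_sum_mul_log {ι : Type*} [Fintype ι] {p q : ι → ℝ}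
    (hp : ∀ i, 0 ≤ p i) (hq : ∀ i, 0 ≤ q i) (hpq : ∀ i, q i = 0 → p i = 0)
    (hsum : ∑ i, q i ≤ ∑ i, p i) :
    ∑ i, negMulLog (p i) ≤ -∑ i, p i * log (q i) := by
  have hterm := Finset.sum_le_sum fun i (_ : i ∈ Finset.univ) =>
    negMulLog_add_mul_log_le_sub (hp i) (hq i) (hpq i)
  rw [Finset.sum_add_distrib, Finset.sum_sub_distrib] at hterm
  linarith

theorem mul_log_mul_div {p r s w : ℝ} (hr : r = 0 → p = 0) (hs : s = 0 → p = 0)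
    (hw : w = 0 → p = 0) :
    p * log (r * s / w) = p * log r + p * log s - p * log w := by
  obtain rfl | hp := eq_or_ne p 0
  · simp only [zero_mul, add_zero, sub_zero]
  · rw [log_div (mul_ne_zero (mt hr hp) (mt hs hp)) (mt hw hp), log_mul (mt hr hp) (mt hs hp)]
    ring

-- Gibbs' inequality for `R` against the product of its marginals, rescaled to the mass of `R`.
theorem sum_negMulLog_add_negMulLog_sum_le {α β : Type*} [Fintype α] [Fintype β] {R : α → β → ℝ}
    (hR : ∀ a b, 0 ≤ R a b) :
    ∑ a, ∑ b, negMulLog (R a b) + negMulLog (∑ a, ∑ b, R a b) ≤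
      ∑ a, negMulLog (∑ b, R a b) + ∑ b, negMulLog (∑ a, R a b) := by
  set r : α → ℝ := fun a => ∑ b, R a b with hr
  set s : β → ℝ := fun b => ∑ a, R a b with hs
  set w : ℝ := ∑ a, r a with hw
  have hs_sum : ∑ b, s b = w := Finset.sum_comm
  have hr_nonneg (a : α) : 0 ≤ r a := Finset.sum_nonneg fun b _ => hR a b
  have hs_nonneg (b : β) : 0 ≤ s b := Finset.sum_nonneg fun a _ => hR a b
  have eq_zero_of_left {a : α} (b : β) (h : r a = 0) : R a b = 0 :=
    (Finset.sum_eq_zero_iff_of_nonneg fun b _ => hR a b).1 h b (Finset.mem_univ b)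
  have eq_zero_of_right (a : α) {b : β} (h : s b = 0) : R a b = 0 :=
    (Finset.sum_eq_zero_iff_of_nonneg fun a _ => hR a b).1 h a (Finset.mem_univ a)
  have eq_zero_of_mass (a : α) (b : β) (h : w = 0) : R a b = 0 :=
    eq_zero_of_left b <|
      (Finset.sum_eq_zero_iff_of_nonneg fun a _ => hr_nonneg a).1 h a (Finset.mem_univ a)
  have eq_zero (i : α × β) (h : r i.1 * s i.2 / w = 0) : R i.1 i.2 = 0 := by
    rcases div_eq_zero_iff.1 h with h | h
    · exact (mul_eq_zero.1 h).elim (eq_zero_of_left i.2) (eq_zero_of_right i.1)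
    · exact eq_zero_of_mass i.1 i.2 h
  have cross_entropy : ∑ a, ∑ b, R a b * log (r a * s b / w) =
      ∑ a, r a * log (r a) + ∑ b, s b * log (s b) - w * log w := by
    simp only [fun a b => mul_log_mul_div (eq_zero_of_left (a := a) b) (eq_zero_of_right a)
      (eq_zero_of_mass a b), Finset.sum_add_distrib, Finset.sum_sub_distrib]
    rw [Finset.sum_comm (f := fun a b => R a b * log (s b))]
    simp only [← Finset.sum_mul, hw, hr, hs]
  have gibbs := sum_negMulLog_le_neg_sum_mul_log (p := fun i : α × β => R i.1 i.2)
    (q := fun i => r i.1 * s i.2 / w) (fun i => hR i.1 i.2)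
    (fun i => div_nonneg (mul_nonneg (hr_nonneg i.1) (hs_nonneg i.2))
      (Finset.sum_nonneg fun a _ => hr_nonneg a)) eq_zero
    (by simp [Fintype.sum_prod_type, ← Finset.sum_div, ← Finset.mul_sum, ← Finset.sum_mul, hs_sum,
      hw, hr])
  simp only [Fintype.sum_prod_type, cross_entropy] at gibbs
  simp only [negMulLog_eq_neg, Finset.sum_neg_distrib] at gibbs ⊢
  linarith

end Entropy

section WeightedMutInfo

variable {α β : Type} [Fintype α] [Fintype β]

/-- The mutual information of an unnormalised joint distribution `R` of total mass `w`, weighted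
by `w`: it equals `w * I(R / w)`, but is written without the division by `w`. -/
noncomputable def weightedMutInfo (R : α → β → ℝ) : ℝ :=
  mutInfo R + (∑ a, ∑ b, R a b) * logb 2 (∑ a, ∑ b, R a b)

theorem weightedMutInfo_eq_sum_negMulLog_div (R : α → β → ℝ) :
    weightedMutInfo R = (∑ a, negMulLog (∑ b, R a b) + ∑ b, negMulLog (∑ a, R a b) -
      ∑ a, ∑ b, negMulLog (R a b) - negMulLog (∑ a, ∑ b, R a b)) / log 2 := by
  simp only [weightedMutInfo, mutInfo, shannonEnt_eq_sum_negMulLog_div, Fintype.sum_prod_type,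
    negMulLog, logb]
  ring

theorem weightedMutInfo_eq_mutInfo {R : α → β → ℝ} (hR : ∑ a, ∑ b, R a b = 1) :
    weightedMutInfo R = mutInfo R := by
  simp [weightedMutInfo, hR]

theorem weightedMutInfo_nonneg {R : α → β → ℝ} (hR : ∀ a b, 0 ≤ R a b) :
    0 ≤ weightedMutInfo R := by
  rw [weightedMutInfo_eq_sum_negMulLog_div]
  have := sum_negMulLog_add_negMulLog_sum_le hR
  exact div_nonneg (by linarith) (log_nonneg one_le_two)

theorem weightedMutInfo_const_mul (c : ℝ) (R : α → β → ℝ) :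
    weightedMutInfo (fun a b => c * R a b) = c * weightedMutInfo R := by
  simp only [weightedMutInfo_eq_sum_negMulLog_div, ← Finset.mul_sum, negMulLog_mul,
    Finset.sum_add_distrib, ← Finset.sum_mul]
  rw [Finset.sum_comm (f := fun b a => R a b)]
  ring

theorem weightedMutInfo_comm (R : α → β → ℝ) :
    weightedMutInfo (fun b a => R a b) = weightedMutInfo R := by
  rw [weightedMutInfo_eq_sum_negMulLog_div, weightedMutInfo_eq_sum_negMulLog_div,
    Finset.sum_comm (f := fun b a => negMulLog (R a b)), Finset.sum_comm (f := fun b a => R a b)]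
  ring

theorem weightedMutInfo_comp_equiv_right {β' : Type} [Fintype β'] (e : β' ≃ β) (R : α → β → ℝ) :
    weightedMutInfo (fun a b => R a (e b)) = weightedMutInfo R := by
  have joint_eq (a : α) : ∑ b, negMulLog (R a (e b)) = ∑ b, negMulLog (R a b) :=
    e.sum_comp fun b => negMulLog (R a b)
  simp only [weightedMutInfo_eq_sum_negMulLog_div, joint_eq, e.sum_comp (R _),
    e.sum_comp fun b => negMulLog (∑ a, R a b)]

variable {A₁ A₂ B₁ B₂ : Type} [Fintype A₁] [Fintype A₂] [Fintype B₁] [Fintype B₂]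

theorem weightedMutInfo_mul_prod (R : A₁ → B₁ → ℝ) (S : A₂ → B₂ → ℝ) :
    weightedMutInfo (fun (a : A₁ × A₂) (b : B₁ × B₂) => R a.1 b.1 * S a.2 b.2) =
      (∑ a, ∑ b, S a b) * weightedMutInfo R + (∑ a, ∑ b, R a b) * weightedMutInfo S := by
  simp only [weightedMutInfo_eq_sum_negMulLog_div, Fintype.sum_prod_type, ← Finset.mul_sum,
    ← Finset.sum_mul, negMulLog_mul, Finset.sum_add_distrib]
  rw [Finset.sum_comm (f := fun b a => R a b), Finset.sum_comm (f := fun b a => S a b)]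
  ring

-- The last sum is the conditional mutual information `I(A₂ : B | A₁)`.
theorem weightedMutInfo_chain_rule (R : A₁ → A₂ → β → ℝ) :
    weightedMutInfo (fun (a : A₁ × A₂) b => R a.1 a.2 b) =
      weightedMutInfo (fun a₁ b => ∑ a₂, R a₁ a₂ b) + ∑ a₁, weightedMutInfo (R a₁) := by
  have sum_swap (a₁ : A₁) : ∑ b, ∑ a₂, R a₁ a₂ b = ∑ a₂, ∑ b, R a₁ a₂ b := Finset.sum_comm
  simp only [weightedMutInfo_eq_sum_negMulLog_div, Fintype.sum_prod_type, sum_swap,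
    ← Finset.sum_div, Finset.sum_add_distrib, Finset.sum_sub_distrib]
  ring

theorem weightedMutInfo_marginal_fst_le {R : α → B₁ → B₂ → ℝ} (hR : ∀ a b₁ b₂, 0 ≤ R a b₁ b₂) :
    weightedMutInfo (fun a b₁ => ∑ b₂, R a b₁ b₂) ≤
      weightedMutInfo (fun a (b : B₁ × B₂) => R a b.1 b.2) := by
  rw [← weightedMutInfo_comm, ← weightedMutInfo_comm fun a (b : B₁ × B₂) => R a b.1 b.2,
    weightedMutInfo_chain_rule fun b₁ b₂ a => R a b₁ b₂]
  exact le_add_of_nonneg_right <| Finset.sum_nonneg fun b₁ _ =>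
    weightedMutInfo_nonneg fun b₂ a => hR a b₁ b₂

theorem weightedMutInfo_marginal_snd_le {R : α → B₁ → B₂ → ℝ} (hR : ∀ a b₁ b₂, 0 ≤ R a b₁ b₂) :
    weightedMutInfo (fun a b₂ => ∑ b₁, R a b₁ b₂) ≤
      weightedMutInfo (fun a (b : B₁ × B₂) => R a b.1 b.2) := by
  rw [← weightedMutInfo_comp_equiv_right (Equiv.prodComm B₂ B₁)]
  exact weightedMutInfo_marginal_fst_le fun a b₂ b₁ => hR a b₁ b₂

theorem weightedMutInfo_marginal_add_sum_le {R : A₁ → A₂ → B₁ → B₂ → ℝ}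
    (hR : ∀ a₁ a₂ b₁ b₂, 0 ≤ R a₁ a₂ b₁ b₂) :
    weightedMutInfo (fun a₁ b₁ => ∑ a₂, ∑ b₂, R a₁ a₂ b₁ b₂) +
        ∑ a₁, weightedMutInfo (fun a₂ b₂ => ∑ b₁, R a₁ a₂ b₁ b₂) ≤
      weightedMutInfo (fun (a : A₁ × A₂) (b : B₁ × B₂) => R a.1 a.2 b.1 b.2) := by
  have sum_swap (a₁ : A₁) (b₁ : B₁) :
      ∑ a₂, ∑ b₂, R a₁ a₂ b₁ b₂ = ∑ b₂, ∑ a₂, R a₁ a₂ b₁ b₂ := Finset.sum_comm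
  simp only [sum_swap]
  rw [weightedMutInfo_chain_rule fun a₁ a₂ (b : B₁ × B₂) => R a₁ a₂ b.1 b.2]
  exact add_le_add
    (weightedMutInfo_marginal_fst_le fun a₁ b₁ b₂ => Finset.sum_nonneg fun a₂ _ => hR a₁ a₂ b₁ b₂)
    (Finset.sum_le_sum fun a₁ _ => weightedMutInfo_marginal_snd_le fun a₂ b₁ b₂ => hR a₁ a₂ b₁ b₂)

end WeightedMutInfo

section Bipartite

variable {A B X Y : Type} [Fintype A] [Fintype B]

/-- A bipartite non-signaling device up to normalisation: a device times a nonnegative weight. The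
total mass need not be required to be independent of the inputs, see
`IsUnnormalizedDevice.sum_sum_eq`. -/
structure IsUnnormalizedDevice (G : A → B → X → Y → ℝ) : Prop where
  nonneg : ∀ a b x y, 0 ≤ G a b x y
  sum_right_eq : ∀ a x y y', ∑ b, G a b x y = ∑ b, G a b x y'
  sum_left_eq : ∀ b y x x', ∑ a, G a b x y = ∑ a, G a b x' y

theorem IsDevice.isUnnormalizedDevice {P : A → B → X → Y → ℝ} (hP : IsDevice P) :
    IsUnnormalizedDevice P :=
  ⟨hP.1, hP.2.2.1, hP.2.2.2⟩

namespace IsUnnormalizedDevice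

theorem sum {ι : Type*} [Fintype ι] {G : ι → A → B → X → Y → ℝ}
    (hG : ∀ i, IsUnnormalizedDevice (G i)) :
    IsUnnormalizedDevice fun a b x y => ∑ i, G i a b x y where
  nonneg a b x y := Finset.sum_nonneg fun i _ => (hG i).nonneg a b x y
  sum_right_eq a x y y' := by
    simp only [Finset.sum_comm (s := (Finset.univ : Finset B)), (hG _).sum_right_eq a x y y']
  sum_left_eq b y x x' := by
    simp only [Finset.sum_comm (s := (Finset.univ : Finset A)), (hG _).sum_left_eq b y x x']

variable {G : A → B → X → Y → ℝ}

theorem const_mul (hG : IsUnnormalizedDevice G) {c : ℝ} (hc : 0 ≤ c) :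
    IsUnnormalizedDevice fun a b x y => c * G a b x y where
  nonneg a b x y := mul_nonneg hc (hG.nonneg a b x y)
  sum_right_eq a x y y' := by simp only [← Finset.mul_sum, hG.sum_right_eq a x y y']
  sum_left_eq b y x x' := by simp only [← Finset.mul_sum, hG.sum_left_eq b y x x']

theorem sum_sum_eq (hG : IsUnnormalizedDevice G) (x x' : X) (y y' : Y) :
    ∑ a, ∑ b, G a b x y = ∑ a, ∑ b, G a b x' y' :=
  calc ∑ a, ∑ b, G a b x y
      = ∑ a, ∑ b, G a b x y' := by simp only [hG.sum_right_eq _ x y y']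
    _ = ∑ b, ∑ a, G a b x y' := Finset.sum_comm
    _ = ∑ b, ∑ a, G a b x' y' := by simp only [hG.sum_left_eq _ y' x x']
    _ = ∑ a, ∑ b, G a b x' y' := Finset.sum_comm

theorem isDevice (hG : IsUnnormalizedDevice G) {x : X} {y : Y} (h : ∑ a, ∑ b, G a b x y = 1) :
    IsDevice G :=
  ⟨hG.nonneg, fun x' y' => (hG.sum_sum_eq x' x y' y).trans h, hG.sum_right_eq, hG.sum_left_eq⟩

theorem exists_isDevice_eq_mul (hG : IsUnnormalizedDevice G) {P : A → B → X → Y → ℝ}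
    (hP : IsDevice P) (x : X) (y : Y) :
    ∃ D : A → B → X → Y → ℝ, IsDevice D ∧
      ∀ a b x' y', G a b x' y' = (∑ a, ∑ b, G a b x y) * D a b x' y' := by
  set w := ∑ a, ∑ b, G a b x y with hw
  have w_nonneg : 0 ≤ w := Finset.sum_nonneg fun a _ => Finset.sum_nonneg fun b _ => hG.nonneg ..
  obtain w_eq | w_ne := eq_or_ne w 0
  -- A vanishing `G` has no normalisation, so any device will do.
  · refine ⟨P, hP, fun a b x' y' => ?_⟩
    have mass_eq : ∑ i : A × B, G i.1 i.2 x' y' = 0 := by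
      rw [Fintype.sum_prod_type, hG.sum_sum_eq x' x y' y, ← hw, w_eq]
    rw [w_eq, zero_mul]
    exact (Finset.sum_eq_zero_iff_of_nonneg fun i _ => hG.nonneg i.1 i.2 x' y').1 mass_eq (a, b)
      (Finset.mem_univ _)
  · refine ⟨fun a b x' y' => w⁻¹ * G a b x' y',
      (hG.const_mul (inv_nonneg.2 w_nonneg)).isDevice (x := x) (y := y) ?_,
      fun a b x' y' => (mul_inv_cancel_left₀ w_ne _).symm⟩
    simp only [← Finset.mul_sum, ← hw, inv_mul_cancel₀ w_ne]

end IsUnnormalizedDevice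

variable {P : A → B → X → Y → ℝ}

theorem sum_weightedMutInfo_mem_nsqSet {ι : Type*} [Fintype ι] {G : ι → A → B → X → Y → ℝ}
    (hP : IsDevice P) (hG : ∀ i, IsUnnormalizedDevice (G i))
    (hsum : ∀ a b x y, ∑ i, G i a b x y = P a b x y) (x : X) (y : Y) :
    ∑ i, weightedMutInfo (fun a b => G i a b x y) ∈ NsqSet P x y := by
  choose D hD hGD using fun i => (hG i).exists_isDevice_eq_mul hP x y
  set w : ι → ℝ := fun i => ∑ a, ∑ b, G i a b x y with hw
  have w_sum : ∑ i, w i = 1 := by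
    rw [← hP.2.1 x y]
    simp only [← hsum, hw]
    exact Finset.sum_comm_cycle.symm
  have weighted_eq (i : ι) :
      weightedMutInfo (fun a b => G i a b x y) = w i * mutInfo (fun a b => D i a b x y) := by
    rw [← weightedMutInfo_eq_mutInfo ((hD i).2.1 x y), ← weightedMutInfo_const_mul]
    exact congrArg weightedMutInfo (funext fun a => funext fun b => hGD i a b x y)
  let e := (Fintype.equivFin ι).symm
  refine ⟨Fintype.card ι, w ∘ e, D ∘ e, fun i => ?_, (e.sum_comp w).trans w_sum,
    fun i => hD (e i), fun a b x' y' => ?_, ?_⟩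
  · exact Finset.sum_nonneg fun a _ => Finset.sum_nonneg fun b _ => (hG (e i)).nonneg a b x y
  · rw [← hsum, ← e.sum_comp]
    exact Finset.sum_congr rfl fun i _ => (hGD (e i) a b x' y').symm
  · rw [← e.sum_comp]
    exact Finset.sum_congr rfl fun i _ => weighted_eq (e i)

theorem nsqSet_nonempty (hP : IsDevice P) (x : X) (y : Y) : (NsqSet P x y).Nonempty :=
  ⟨_, sum_weightedMutInfo_mem_nsqSet (ι := Unit) hP (fun _ => hP.isUnnormalizedDevice)
    (by simp) x y⟩

theorem nsqSet_bddBelow (P : A → B → X → Y → ℝ) (x : X) (y : Y) : BddBelow (NsqSet P x y) := by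
  refine ⟨0, ?_⟩
  rintro _ ⟨n, p, D, hp, -, hD, -, rfl⟩
  refine Finset.sum_nonneg fun i _ => mul_nonneg (hp i) ?_
  rw [← weightedMutInfo_eq_mutInfo ((hD i).2.1 x y)]
  exact weightedMutInfo_nonneg fun a b => (hD i).1 a b x y

end Bipartite

section FourPartite

variable {A₁ A₂ B₁ B₂ X₁ X₂ Y₁ Y₂ : Type}

/-- The marginal of a four-partite device on `(A₁, B₁)`, at inputs `x₂, y₂` of the discarded
pair. -/
def marginalFst [Fintype A₂] [Fintype B₂]
    (R : A₁ → A₂ → B₁ → B₂ → X₁ → X₂ → Y₁ → Y₂ → ℝ) (x₂ : X₂) (y₂ : Y₂) :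
    A₁ → B₁ → X₁ → Y₁ → ℝ :=
  fun a₁ b₁ x₁ y₁ => ∑ a₂, ∑ b₂, R a₁ a₂ b₁ b₂ x₁ x₂ y₁ y₂

/-- The unnormalised device on `(A₂, B₂)` obtained from a four-partite device by conditioning on
the output `a₁` at inputs `x₁, y₁` and discarding `b₁`. Its mass is the probability of `a₁`. -/
def conditionalSnd [Fintype B₁]
    (R : A₁ → A₂ → B₁ → B₂ → X₁ → X₂ → Y₁ → Y₂ → ℝ) (x₁ : X₁) (y₁ : Y₁)
    (a₁ : A₁) : A₂ → B₂ → X₂ → Y₂ → ℝ :=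
  fun a₂ b₂ x₂ y₂ => ∑ b₁, R a₁ a₂ b₁ b₂ x₁ x₂ y₁ y₂

/-- The marginal of a four-partite device on `(A₂, B₂)`, at inputs `x₁, y₁` of the discarded
pair. -/
def marginalSnd [Fintype A₁] [Fintype B₁]
    (R : A₁ → A₂ → B₁ → B₂ → X₁ → X₂ → Y₁ → Y₂ → ℝ) (x₁ : X₁) (y₁ : Y₁) :
    A₂ → B₂ → X₂ → Y₂ → ℝ :=
  fun a₂ b₂ x₂ y₂ => ∑ a₁, conditionalSnd R x₁ y₁ a₁ a₂ b₂ x₂ y₂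

/-- The four-partite device describing two independent bipartite devices. -/
def tensorDevice (P : A₁ → B₁ → X₁ → Y₁ → ℝ) (Q : A₂ → B₂ → X₂ → Y₂ → ℝ) :
    A₁ → A₂ → B₁ → B₂ → X₁ → X₂ → Y₁ → Y₂ → ℝ :=
  fun a₁ a₂ b₁ b₂ x₁ x₂ y₁ y₂ => P a₁ b₁ x₁ y₁ * Q a₂ b₂ x₂ y₂

theorem marginalFst_tensorDevice [Fintype A₂] [Fintype B₂] (P : A₁ → B₁ → X₁ → Y₁ → ℝ)
    {Q : A₂ → B₂ → X₂ → Y₂ → ℝ} (hQ : IsDevice Q) (x₂ : X₂) (y₂ : Y₂) :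
    marginalFst (tensorDevice P Q) x₂ y₂ = P := by
  funext a₁ b₁ x₁ y₁
  simp only [marginalFst, tensorDevice, ← Finset.mul_sum, hQ.2.1, mul_one]

theorem marginalSnd_tensorDevice [Fintype A₁] [Fintype B₁] {P : A₁ → B₁ → X₁ → Y₁ → ℝ}
    (hP : IsDevice P) (Q : A₂ → B₂ → X₂ → Y₂ → ℝ) (x₁ : X₁) (y₁ : Y₁) :
    marginalSnd (tensorDevice P Q) x₁ y₁ = Q := by
  funext a₂ b₂ x₂ y₂
  simp only [marginalSnd, conditionalSnd, tensorDevice, ← Finset.sum_mul, hP.2.1, one_mul]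

variable [Fintype A₁] [Fintype A₂] [Fintype B₁] [Fintype B₂]

namespace IsDevice4

variable {R : A₁ → A₂ → B₁ → B₂ → X₁ → X₂ → Y₁ → Y₂ → ℝ}

theorem isUnnormalizedDevice_sliceFst (hR : IsDevice4 R) (a₂ : A₂) (b₂ : B₂) (x₂ : X₂) (y₂ : Y₂) :
    IsUnnormalizedDevice fun a₁ b₁ x₁ y₁ => R a₁ a₂ b₁ b₂ x₁ x₂ y₁ y₂ := by
  obtain ⟨nonneg, -, noSignal_A₁, -, noSignal_B₁, -⟩ := hR
  exact ⟨fun a₁ b₁ x₁ y₁ => nonneg .., fun a₁ x₁ y₁ y₁' => noSignal_B₁ ..,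
    fun b₁ y₁ x₁ x₁' => noSignal_A₁ ..⟩

theorem isUnnormalizedDevice_sliceSnd (hR : IsDevice4 R) (a₁ : A₁) (b₁ : B₁) (x₁ : X₁) (y₁ : Y₁) :
    IsUnnormalizedDevice fun a₂ b₂ x₂ y₂ => R a₁ a₂ b₁ b₂ x₁ x₂ y₁ y₂ := by
  obtain ⟨nonneg, -, -, noSignal_A₂, -, noSignal_B₂⟩ := hR
  exact ⟨fun a₂ b₂ x₂ y₂ => nonneg .., fun a₂ x₂ y₂ y₂' => noSignal_B₂ ..,
    fun b₂ y₂ x₂ x₂' => noSignal_A₂ ..⟩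

theorem isUnnormalizedDevice_conditionalSnd (hR : IsDevice4 R) (x₁ : X₁) (y₁ : Y₁) (a₁ : A₁) :
    IsUnnormalizedDevice (conditionalSnd R x₁ y₁ a₁) :=
  .sum fun b₁ => hR.isUnnormalizedDevice_sliceSnd a₁ b₁ x₁ y₁

theorem isDevice_marginalFst [Nonempty X₁] [Nonempty Y₁] (hR : IsDevice4 R) (x₂ : X₂) (y₂ : Y₂) :
    IsDevice (marginalFst R x₂ y₂) := by
  inhabit X₁
  inhabit Y₁
  have hmarg : IsUnnormalizedDevice (marginalFst R x₂ y₂) :=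
    .sum fun a₂ => .sum fun b₂ => hR.isUnnormalizedDevice_sliceFst a₂ b₂ x₂ y₂
  refine hmarg.isDevice (x := default) (y := default) ?_
  rw [← hR.2.1 default x₂ default y₂]
  exact Finset.sum_congr rfl fun a₁ _ => Finset.sum_comm

theorem isDevice_marginalSnd [Nonempty X₂] [Nonempty Y₂] (hR : IsDevice4 R) (x₁ : X₁) (y₁ : Y₁) :
    IsDevice (marginalSnd R x₁ y₁) := by
  inhabit X₂
  inhabit Y₂
  have hmarg : IsUnnormalizedDevice (marginalSnd R x₁ y₁) :=
    .sum fun a₁ => hR.isUnnormalizedDevice_conditionalSnd x₁ y₁ a₁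
  refine hmarg.isDevice (x := default) (y := default) ?_
  rw [← hR.2.1 x₁ default y₁ default]
  simp only [marginalSnd, conditionalSnd]
  rw [Finset.sum_comm_cycle]
  exact Finset.sum_congr rfl fun a₁ _ => Finset.sum_congr rfl fun a₂ _ => Finset.sum_comm

end IsDevice4

theorem IsDevice.tensorDevice {P : A₁ → B₁ → X₁ → Y₁ → ℝ} {Q : A₂ → B₂ → X₂ → Y₂ → ℝ}
    (hP : IsDevice P) (hQ : IsDevice Q) : IsDevice4 (tensorDevice P Q) := by
  obtain ⟨P_nonneg, P_sum, P_right, P_left⟩ := hP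
  obtain ⟨Q_nonneg, Q_sum, Q_right, Q_left⟩ := hQ
  simp only [IsDevice4, _root_.tensorDevice, ← Finset.mul_sum, ← Finset.sum_mul]
  refine ⟨fun a₁ a₂ b₁ b₂ x₁ x₂ y₁ y₂ => mul_nonneg (P_nonneg ..) (Q_nonneg ..),
    fun x₁ x₂ y₁ y₂ => by rw [Q_sum, P_sum, mul_one], ?_, ?_, ?_, ?_⟩
  · exact fun a₂ b₁ b₂ x₂ y₁ y₂ x₁ x₁' => by rw [P_left b₁ y₁ x₁ x₁']
  · exact fun a₁ b₁ b₂ x₁ y₁ y₂ x₂ x₂' => by rw [Q_left b₂ y₂ x₂ x₂']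
  · exact fun a₁ a₂ b₂ x₁ x₂ y₂ y₁ y₁' => by rw [P_right a₁ x₁ y₁ y₁']
  · exact fun a₁ a₂ b₁ x₁ x₂ y₁ y₂ y₂' => by rw [Q_right a₂ x₂ y₂ y₂']

theorem sum_mul_mutInfo_mem_nsq4Set {ι : Type*} [Fintype ι]
    {R : A₁ → A₂ → B₁ → B₂ → X₁ → X₂ → Y₁ → Y₂ → ℝ} {p : ι → ℝ}
    {D : ι → A₁ → A₂ → B₁ → B₂ → X₁ → X₂ → Y₁ → Y₂ → ℝ}
    (hp : ∀ i, 0 ≤ p i) (hp_sum : ∑ i, p i = 1) (hD : ∀ i, IsDevice4 (D i))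
    (hmix : ∀ a₁ a₂ b₁ b₂ x₁ x₂ y₁ y₂,
      ∑ i, p i * D i a₁ a₂ b₁ b₂ x₁ x₂ y₁ y₂ = R a₁ a₂ b₁ b₂ x₁ x₂ y₁ y₂)
    (x₁ : X₁) (x₂ : X₂) (y₁ : Y₁) (y₂ : Y₂) :
    ∑ i, p i * mutInfo (fun (a : A₁ × A₂) (b : B₁ × B₂) => D i a.1 a.2 b.1 b.2 x₁ x₂ y₁ y₂) ∈
      Nsq4Set R x₁ x₂ y₁ y₂ := by
  let e := (Fintype.equivFin ι).symm
  refine ⟨Fintype.card ι, p ∘ e, D ∘ e, fun i => hp (e i), (e.sum_comp p).trans hp_sum,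
    fun i => hD (e i), fun a₁ a₂ b₁ b₂ x₁' x₂' y₁' y₂' => ?_, ?_⟩
  · rw [← hmix]
    exact e.sum_comp fun i => p i * D i a₁ a₂ b₁ b₂ x₁' x₂' y₁' y₂'
  · exact (e.sum_comp _).symm

theorem nsq4Set_nonempty {R : A₁ → A₂ → B₁ → B₂ → X₁ → X₂ → Y₁ → Y₂ → ℝ} (hR : IsDevice4 R)
    (x₁ : X₁) (x₂ : X₂) (y₁ : Y₁) (y₂ : Y₂) : (Nsq4Set R x₁ x₂ y₁ y₂).Nonempty :=
  ⟨_, sum_mul_mutInfo_mem_nsq4Set (ι := Unit) (p := 1) (D := fun _ => R) (by simp) (by simp)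
    (fun _ => hR) (by simp) x₁ x₂ y₁ y₂⟩

theorem nsq4Set_bddBelow (R : A₁ → A₂ → B₁ → B₂ → X₁ → X₂ → Y₁ → Y₂ → ℝ)
    (x₁ : X₁) (x₂ : X₂) (y₁ : Y₁) (y₂ : Y₂) : BddBelow (Nsq4Set R x₁ x₂ y₁ y₂) := by
  refine ⟨0, ?_⟩
  rintro _ ⟨n, p, D, hp, -, hD, -, rfl⟩
  refine Finset.sum_nonneg fun i _ => mul_nonneg (hp i) ?_
  rw [← weightedMutInfo_eq_mutInfo (by simpa only [Fintype.sum_prod_type] using (hD i).2.1 ..)]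
  exact weightedMutInfo_nonneg fun a b => (hD i).1 ..

end FourPartite

section Additivity

variable {A₁ A₂ B₁ B₂ X₁ X₂ Y₁ Y₂ : Type} [Fintype A₁] [Fintype A₂] [Fintype B₁] [Fintype B₂]

theorem mutInfo_tensorDevice {P : A₁ → B₁ → X₁ → Y₁ → ℝ} {Q : A₂ → B₂ → X₂ → Y₂ → ℝ}
    (hP : IsDevice P) (hQ : IsDevice Q) (x₁ : X₁) (x₂ : X₂) (y₁ : Y₁) (y₂ : Y₂) :
    mutInfo (fun (a : A₁ × A₂) (b : B₁ × B₂) =>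
        tensorDevice P Q a.1 a.2 b.1 b.2 x₁ x₂ y₁ y₂) =
      mutInfo (fun a b => P a b x₁ y₁) + mutInfo (fun a b => Q a b x₂ y₂) := by
  have hPQ := (hP.tensorDevice hQ).2.1 x₁ x₂ y₁ y₂
  rw [← weightedMutInfo_eq_mutInfo (hP.2.1 x₁ y₁), ← weightedMutInfo_eq_mutInfo (hQ.2.1 x₂ y₂),
    ← weightedMutInfo_eq_mutInfo (by simpa only [Fintype.sum_prod_type] using hPQ)]
  simp only [tensorDevice]
  rw [weightedMutInfo_mul_prod (fun a b => P a b x₁ y₁) (fun a b => Q a b x₂ y₂), hP.2.1, hQ.2.1,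
    one_mul, one_mul]

theorem nsqSet_add_nsqSet_subset (P : A₁ → B₁ → X₁ → Y₁ → ℝ) (Q : A₂ → B₂ → X₂ → Y₂ → ℝ)
    (x₁ : X₁) (x₂ : X₂) (y₁ : Y₁) (y₂ : Y₂) :
    NsqSet P x₁ y₁ + NsqSet Q x₂ y₂ ⊆ Nsq4Set (tensorDevice P Q) x₁ x₂ y₁ y₂ := by
  rw [Set.add_subset_iff]
  rintro r ⟨m, p, D, hp, hp_sum, hD, hD_mix, hr⟩ s ⟨n, q, E, hq, hq_sum, hE, hE_mix, hs⟩
  have weight_sum : ∑ k : Fin m × Fin n, p k.1 * q k.2 = 1 := by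
    rw [Fintype.sum_prod_type, ← Fintype.sum_mul_sum, hp_sum, hq_sum, mul_one]
  have value_eq : r + s = ∑ k : Fin m × Fin n, p k.1 * q k.2 *
      mutInfo (fun (a : A₁ × A₂) (b : B₁ × B₂) =>
        tensorDevice (D k.1) (E k.2) a.1 a.2 b.1 b.2 x₁ x₂ y₁ y₂) :=
    calc r + s = r * ∑ j, q j + (∑ i, p i) * s := by rw [hp_sum, hq_sum, mul_one, one_mul]
      _ = _ := by
        rw [hr, hs, Fintype.sum_mul_sum, Fintype.sum_mul_sum]
        simp only [mutInfo_tensorDevice (hD _) (hE _), mul_add, Finset.sum_add_distrib,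
          Fintype.sum_prod_type, mul_assoc, mul_comm (mutInfo _)]
  rw [value_eq]
  refine sum_mul_mutInfo_mem_nsq4Set (p := fun k : Fin m × Fin n => p k.1 * q k.2)
    (D := fun k => tensorDevice (D k.1) (E k.2)) (fun k => mul_nonneg (hp k.1) (hq k.2))
    weight_sum (fun k => (hD k.1).tensorDevice (hE k.2)) (fun a₁ a₂ b₁ b₂ x₁ x₂ y₁ y₂ => ?_)
    x₁ x₂ y₁ y₂
  simp only [tensorDevice, ← hD_mix, ← hE_mix, Fintype.sum_mul_sum, Fintype.sum_prod_type,
    mul_mul_mul_comm]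

theorem exists_nsqSet_add_le_of_mem_nsq4Set {R : A₁ → A₂ → B₁ → B₂ → X₁ → X₂ → Y₁ → Y₂ → ℝ}
    (hR : IsDevice4 R) {x₁ : X₁} {x₂ : X₂} {y₁ : Y₁} {y₂ : Y₂} {r : ℝ}
    (hr : r ∈ Nsq4Set R x₁ x₂ y₁ y₂) :
    ∃ s ∈ NsqSet (marginalFst R x₂ y₂) x₁ y₁, ∃ t ∈ NsqSet (marginalSnd R x₁ y₁) x₂ y₂,
      s + t ≤ r := by
  obtain ⟨n, p, D, hp, -, hD, hmix, rfl⟩ := hr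
  have : Nonempty X₁ := ⟨x₁⟩
  have : Nonempty X₂ := ⟨x₂⟩
  have : Nonempty Y₁ := ⟨y₁⟩
  have : Nonempty Y₂ := ⟨y₂⟩
  have mem_fst := sum_weightedMutInfo_mem_nsqSet
    (G := fun i a b x y => p i * marginalFst (D i) x₂ y₂ a b x y)
    (hR.isDevice_marginalFst x₂ y₂)
    (fun i => ((hD i).isDevice_marginalFst x₂ y₂).isUnnormalizedDevice.const_mul (hp i))
    (fun a b x y => by
      simp only [marginalFst, ← hmix, Finset.mul_sum]
      exact Finset.sum_comm_cycle.symm) x₁ y₁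
  have mem_snd := sum_weightedMutInfo_mem_nsqSet
    (G := fun (k : Fin n × A₁) a b x y => p k.1 * conditionalSnd (D k.1) x₁ y₁ k.2 a b x y)
    (hR.isDevice_marginalSnd x₁ y₁)
    (fun k => ((hD k.1).isUnnormalizedDevice_conditionalSnd x₁ y₁ k.2).const_mul (hp k.1))
    (fun a b x y => by
      simp only [marginalSnd, conditionalSnd, ← hmix, Finset.mul_sum, Fintype.sum_prod_type]
      exact Finset.sum_comm_cycle.symm) x₂ y₂
  refine ⟨_, mem_fst, _, mem_snd, ?_⟩
  simp only [weightedMutInfo_const_mul, Fintype.sum_prod_type, ← Finset.mul_sum,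
    ← Finset.sum_add_distrib, ← mul_add]
  refine Finset.sum_le_sum fun i _ => mul_le_mul_of_nonneg_left ?_ (hp i)
  rw [← weightedMutInfo_eq_mutInfo (by simpa only [Fintype.sum_prod_type] using (hD i).2.1 ..)]
  exact weightedMutInfo_marginal_add_sum_le fun a₁ a₂ b₁ b₂ => (hD i).1 ..

theorem sInf_nsqSet_marginal_add_le {R : A₁ → A₂ → B₁ → B₂ → X₁ → X₂ → Y₁ → Y₂ → ℝ}
    (hR : IsDevice4 R) (x₁ : X₁) (x₂ : X₂) (y₁ : Y₁) (y₂ : Y₂) :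
    sInf (NsqSet (marginalFst R x₂ y₂) x₁ y₁) + sInf (NsqSet (marginalSnd R x₁ y₁) x₂ y₂) ≤
      sInf (Nsq4Set R x₁ x₂ y₁ y₂) := by
  refine le_csInf (nsq4Set_nonempty hR x₁ x₂ y₁ y₂) fun r hr => ?_
  obtain ⟨s, hs, t, ht, hst⟩ := exists_nsqSet_add_le_of_mem_nsq4Set hR hr
  exact (add_le_add (csInf_le (nsqSet_bddBelow ..) hs) (csInf_le (nsqSet_bddBelow ..) ht)).trans hst

variable {P : A₁ → B₁ → X₁ → Y₁ → ℝ} {Q : A₂ → B₂ → X₂ → Y₂ → ℝ}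

theorem sInf_nsq4Set_tensorDevice_le (hP : IsDevice P) (hQ : IsDevice Q)
    (x₁ : X₁) (x₂ : X₂) (y₁ : Y₁) (y₂ : Y₂) :
    sInf (Nsq4Set (tensorDevice P Q) x₁ x₂ y₁ y₂) ≤
      sInf (NsqSet P x₁ y₁) + sInf (NsqSet Q x₂ y₂) := by
  have hP_nonempty := nsqSet_nonempty hP x₁ y₁
  have hQ_nonempty := nsqSet_nonempty hQ x₂ y₂
  rw [← csInf_add hP_nonempty (nsqSet_bddBelow ..) hQ_nonempty (nsqSet_bddBelow ..)]
  exact csInf_le_csInf (nsq4Set_bddBelow ..) (hP_nonempty.add hQ_nonempty)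
    (nsqSet_add_nsqSet_subset ..)

theorem sInf_nsq4Set_tensorDevice (hP : IsDevice P) (hQ : IsDevice Q)
    (x₁ : X₁) (x₂ : X₂) (y₁ : Y₁) (y₂ : Y₂) :
    sInf (Nsq4Set (tensorDevice P Q) x₁ x₂ y₁ y₂) =
      sInf (NsqSet P x₁ y₁) + sInf (NsqSet Q x₂ y₂) := by
  refine (sInf_nsq4Set_tensorDevice_le hP hQ x₁ x₂ y₁ y₂).antisymm ?_
  simpa only [marginalFst_tensorDevice P hQ, marginalSnd_tensorDevice hP Q] using
    sInf_nsqSet_marginal_add_le (hP.tensorDevice hQ) x₁ x₂ y₁ y₂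

end Additivity

-- The pairs of indices are regrouped as the inputs of a four-partite device are.
theorem sup'_univ_add_sup'_univ {α β γ δ : Type*} [Fintype α] [Fintype β] [Fintype γ] [Fintype δ]
    [Nonempty α] [Nonempty β] [Nonempty γ] [Nonempty δ] (f : α × γ → ℝ) (g : β × δ → ℝ) :
    Finset.univ.sup' Finset.univ_nonempty f + Finset.univ.sup' Finset.univ_nonempty g =
      Finset.univ.sup' Finset.univ_nonempty fun t : (α × β) × (γ × δ) =>
        f (t.1.1, t.2.1) + g (t.1.2, t.2.2) :=
  calc _ = Finset.univ.sup' Finset.univ_nonempty fun u : (α × γ) × (β × δ) => f u.1 + g u.2 := by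
        simp_rw [← Finset.univ_product_univ, Finset.sup'_product_left, ← Finset.add_sup',
          ← Finset.sup'_add]
    _ = _ := by
        simp only [Finset.sup'_univ_eq_ciSup]
        exact ((Equiv.prodProdProdComm α β γ δ).iSup_congr fun t => rfl).symm

/-- Additivity of the squashed non-locality on tensor products: the tensor product of two
bipartite non-signaling devices is a fully non-signaling four-partite device, and its
squashed non-locality is the sum of the squashed non-localities of the factors. -/
theorem Nsq_additive_tensor {A1 A2 B1 B2 X1 X2 Y1 Y2 : Type}
    [Fintype A1] [Fintype A2] [Fintype B1] [Fintype B2]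
    [Fintype X1] [Fintype X2] [Fintype Y1] [Fintype Y2]
    [Nonempty X1] [Nonempty X2] [Nonempty Y1] [Nonempty Y2]
    (P : A1 → B1 → X1 → Y1 → ℝ) (hP : IsDevice P)
    (Q : A2 → B2 → X2 → Y2 → ℝ) (hQ : IsDevice Q) :
    IsDevice4 (fun a1 a2 b1 b2 x1 x2 y1 y2 => P a1 b1 x1 y1 * Q a2 b2 x2 y2) ∧
      Nsq4 (fun a1 a2 b1 b2 x1 x2 y1 y2 => P a1 b1 x1 y1 * Q a2 b2 x2 y2) =
        Nsq P + Nsq Q := by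
  refine ⟨hP.tensorDevice hQ, ?_⟩
  rw [Nsq, Nsq, sup'_univ_add_sup'_univ]
  exact Finset.sup'_congr _ rfl fun t _ =>
    sInf_nsq4Set_tensorDevice hP hQ t.1.1 t.1.2 t.2.1 t.2.2
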